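/- If the algebra H_{λ,α,β} is a PBW deformation of S⋊G, then H_{λ,α,β} is the fiber at t = 1 of a graded deformation of A = S⋊G: there exists a graded deformation A_t of S⋊G over k[t] such that H_{λ,α,β} ≅ A_t|_{t=1} as filtered algebras. -/

import Mathlib

open TensorProduct

noncomputable section

namespace DeformKoszul

variable (k G V : Type) [Field k] [Group G] [AddCommGroup V] [Module k V]

/-! ### Koszulity (Backelin's distributivity criterion) -/

/-- `Vpow n = V^{⊗(n+1)}`. -/
def Vpow : ℕ → ModuleCat k
  | 0 => ModuleCat.of k V
  | n+1 => ModuleCat.of k (V ⊗[k] (Vpow n))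

variable (R : Submodule k (V ⊗[k] V))

/-- `Wsub m i` is the subspace `V^{⊗i} ⊗ R ⊗ V^{⊗(m-1-i)}` of `V^{⊗(m+1)}`
(junk value `⊥` for `i > m-1`). -/
def Wsub : (m : ℕ) → ℕ → Submodule k (Vpow k V m)
  | 0, _ => ⊥
  | 1, 0 => R
  | 1, _+1 => ⊥
  | m+2, 0 =>
      Submodule.map (TensorProduct.assoc k V V (Vpow k V m)).toLinearMap
        (LinearMap.range (TensorProduct.map R.subtype (LinearMap.id (M := Vpow k V m))))
  | m+1, i+1 =>
      LinearMap.range (TensorProduct.map (LinearMap.id (M := V)) (Wsub m i).subtype)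

/-- The quadratic algebra `S = T(V)/(R)` is **Koszul**.  We use Backelin's criterion:
`S` is Koszul iff for each `n` the subspaces `V^{⊗i} ⊗ R ⊗ V^{⊗j}` of `V^{⊗n}`
generate a distributive lattice; for finite collections of subspaces of a vector space
distributivity is equivalent to the existence of a basis of `V^{⊗n}` from which each of
the subspaces can be spanned. -/
def IsKoszul : Prop :=
  ∀ m : ℕ, ∃ (ι : Type) (b : Module.Basis ι k (Vpow k V m)),
    ∀ i : ℕ, ∃ J : Set ι, Wsub k V R m i = Submodule.span k (⇑b '' J)

/-! ### The deformed algebra `H_{λ,α,β}` -/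

/-- The free `k`-algebra on the vector space `kG ⊕ V`. -/
abbrev FreeAlg := TensorAlgebra k (MonoidAlgebra k G × V)

/-- The canonical embedding of the group algebra `kG` into the free algebra. -/
def gIn : MonoidAlgebra k G →ₗ[k] FreeAlg k G V :=
  (TensorAlgebra.ι k).comp (LinearMap.inl k (MonoidAlgebra k G) V)

/-- The canonical embedding of `V` into the free algebra. -/
def vIn : V →ₗ[k] FreeAlg k G V :=
  (TensorAlgebra.ι k).comp (LinearMap.inr k (MonoidAlgebra k G) V)

/-- `V ⊗ V → FreeAlg`, `v ⊗ w ↦ v·w`. -/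
def mulVV : V ⊗[k] V →ₗ[k] FreeAlg k G V :=
  (LinearMap.mul' k _).comp (TensorProduct.map (vIn k G V) (vIn k G V))

/-- `V ⊗ kG → FreeAlg`, `v ⊗ x ↦ v·x`. -/
def embVG : V ⊗[k] MonoidAlgebra k G →ₗ[k] FreeAlg k G V :=
  (LinearMap.mul' k _).comp (TensorProduct.map (vIn k G V) (gIn k G V))

variable (ρ : Representation k G V)

/-- The defining relations of `H_{λ,α,β}` over the generating space `kG ⊕ V`:
`kG` is a subalgebra (with the same unit), the group-action relations
`g·v = (ᵍv)·g + λ(g ⊗ v)` deforming `R'` by `λ`, and the quadratic Koszul relations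
`r = α(r) + β(r)` for `r ∈ R`. -/
inductive GRel (lam : MonoidAlgebra k G ⊗[k] V →ₗ[k] MonoidAlgebra k G)
    (α : R →ₗ[k] (V ⊗[k] MonoidAlgebra k G))
    (β : R →ₗ[k] MonoidAlgebra k G) :
    FreeAlg k G V → FreeAlg k G V → Prop
  | unit : GRel lam α β (gIn k G V 1) 1
  | gmul (x y : MonoidAlgebra k G) :
      GRel lam α β (gIn k G V x * gIn k G V y) (gIn k G V (x * y))
  | act (g : G) (v : V) :
      GRel lam α β (gIn k G V (MonoidAlgebra.of k G g) * vIn k G V v)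
        (vIn k G V (ρ g v) * gIn k G V (MonoidAlgebra.of k G g)
          + gIn k G V (lam (MonoidAlgebra.of k G g ⊗ₜ[k] v)))
  | quad (r : R) :
      GRel lam α β (mulVV k G V (r : V ⊗[k] V))
        (embVG k G V (α r) + gIn k G V (β r))

variable (lam : MonoidAlgebra k G ⊗[k] V →ₗ[k] MonoidAlgebra k G)
    (α : R →ₗ[k] (V ⊗[k] MonoidAlgebra k G))
    (β : R →ₗ[k] MonoidAlgebra k G)

/-- The algebra `H_{λ,α,β}`.  For `lam = 0`, `α = 0`, `β = 0` this is (the presentation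
of) the skew group algebra `S ⋊ G`, where `S = T(V)/(R)`. -/
abbrev HAlg := RingQuot (GRel k G V R ρ lam α β)

/-- The quotient map onto `H_{λ,α,β}`. -/
def toH : FreeAlg k G V →ₐ[k] HAlg k G V R ρ lam α β :=
  RingQuot.mkAlgHom k (GRel k G V R ρ lam α β)

/-- Degree-`n` part of the free algebra: `kG` has degree 0 and `V` degree 1. -/
def grT : ℕ → Submodule k (FreeAlg k G V)
  | 0 => Subalgebra.toSubmodule (Algebra.adjoin k (Set.range (gIn k G V)))
  | n+1 => grT n * (LinearMap.range (vIn k G V) * grT 0)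

/-- Filtration of the free algebra, `kG` in degree 0 and `V` in degree 1. -/
def filtT : ℕ → Submodule k (FreeAlg k G V)
  | 0 => grT k G V 0
  | n+1 => filtT n ⊔ grT k G V (n+1)

/-- The induced filtration on `H_{λ,α,β}`. -/
def filtH (d : ℕ) : Submodule k (HAlg k G V R ρ lam α β) :=
  (filtT k G V d).map (toH k G V R ρ lam α β).toLinearMap

/-- `H_{λ,α,β}` is a **PBW deformation** of `S ⋊ G`:  the associated graded algebra is
`S ⋊ G`, equivalently (all filtered pieces being finite dimensional) each filtered
piece has the same dimension as the corresponding one of `S ⋊ G = H_{0,0,0}`. -/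
def IsPBW : Prop :=
  ∀ d, Module.finrank k (filtH k G V R ρ lam α β d)
    = Module.finrank k (filtH k G V R ρ 0 0 0 d)

/-! ### The skew group algebra and auxiliary maps -/

/-- The skew group algebra `S ⋊ G`, presented as `H_{0,0,0}`. -/
abbrev SkewA := HAlg k G V R ρ 0 0 0

/-- The image of `kG` in `S ⋊ G`. -/
def gA : MonoidAlgebra k G →ₗ[k] SkewA k G V R ρ :=
  (toH k G V R ρ 0 0 0).toLinearMap.comp (gIn k G V)

/-- The image of `V` in `S ⋊ G`. -/
def vA : V →ₗ[k] SkewA k G V R ρ :=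
  (toH k G V R ρ 0 0 0).toLinearMap.comp (vIn k G V)

/-- `g`, as an element of the group algebra. -/
def ofg (g : G) : MonoidAlgebra k G := MonoidAlgebra.of k G g

/-- The twist map `σ : kG ⊗ V → V ⊗ kG`, `g ⊗ v ↦ ᵍv ⊗ g`. -/
def sigma : MonoidAlgebra k G ⊗[k] V →ₗ[k] V ⊗[k] MonoidAlgebra k G :=
  TensorProduct.lift
    (((Finsupp.lift (V →ₗ[k] (V ⊗[k] MonoidAlgebra k G)) k G
      (fun g => ((TensorProduct.mk k V (MonoidAlgebra k G)).flip (MonoidAlgebra.of k G g)).comp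
        (ρ g))).comp (MonoidAlgebra.coeffLinearEquiv k).toLinearMap :
      MonoidAlgebra k G →ₗ[k] (V →ₗ[k] (V ⊗[k] MonoidAlgebra k G))))

/-- `λ(g ⊗ -) : V → kG` for fixed `g`. -/
def lamMk (g : G) : V →ₗ[k] MonoidAlgebra k G :=
  lam.comp ((TensorProduct.mk k (MonoidAlgebra k G) V) (MonoidAlgebra.of k G g))

variable (hR : ∀ (g : G) (x : V ⊗[k] V), x ∈ R → TensorProduct.map (ρ g) (ρ g) x ∈ R)

/-- The diagonal action of `g` on `R ⊆ V ⊗ V`. -/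
def rActR (g : G) : R →ₗ[k] R :=
  (TensorProduct.map (ρ g) (ρ g)).restrict (fun x hx => hR g x hx)

/-- Multiplication `V ⊗ kG → S ⋊ G`. -/
def embVGA : V ⊗[k] MonoidAlgebra k G →ₗ[k] SkewA k G V R ρ :=
  (LinearMap.mul' k _).comp (TensorProduct.map (vA k G V R ρ) (gA k G V R ρ))

/-- Multiplication `kG ⊗ V → S ⋊ G`. -/
def embGVA : MonoidAlgebra k G ⊗[k] V →ₗ[k] SkewA k G V R ρ :=
  (LinearMap.mul' k _).comp (TensorProduct.map (gA k G V R ρ) (vA k G V R ρ))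

/-- Multiplication `(V ⊗ kG) ⊗ V → S ⋊ G`. -/
def embVGVA : (V ⊗[k] MonoidAlgebra k G) ⊗[k] V →ₗ[k] SkewA k G V R ρ :=
  (LinearMap.mul' k _).comp (TensorProduct.map (embVGA k G V R ρ) (vA k G V R ρ))

/-- Multiplication `V ⊗ (V ⊗ kG) → S ⋊ G`. -/
def embVVGA : V ⊗[k] (V ⊗[k] MonoidAlgebra k G) →ₗ[k] SkewA k G V R ρ :=
  (LinearMap.mul' k _).comp (TensorProduct.map (vA k G V R ρ) (embVGA k G V R ρ))

/-- The inclusion `R ⊗ V → V ⊗ (V ⊗ V)`. -/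
def inclRV : (R : Submodule k (V ⊗[k] V)) ⊗[k] V →ₗ[k] V ⊗[k] (V ⊗[k] V) :=
  (TensorProduct.assoc k V V V).toLinearMap.comp
    (TensorProduct.map R.subtype LinearMap.id)

/-- The inclusion `V ⊗ R → V ⊗ (V ⊗ V)`. -/
def inclVR : V ⊗[k] (R : Submodule k (V ⊗[k] V)) →ₗ[k] V ⊗[k] (V ⊗[k] V) :=
  TensorProduct.map LinearMap.id R.subtype

/-- The inclusion `R ⊗ kG → V ⊗ (V ⊗ kG)`. -/
def inclRG : (R : Submodule k (V ⊗[k] V)) ⊗[k] MonoidAlgebra k G →ₗ[k]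
    V ⊗[k] (V ⊗[k] MonoidAlgebra k G) :=
  (TensorProduct.assoc k V V (MonoidAlgebra k G)).toLinearMap.comp
    (TensorProduct.map R.subtype LinearMap.id)

/-- `((1 ⊗ σ)(α ⊗ 1) − 1 ⊗ α)(x)`, computed from the two presentations
`x₁ ∈ R ⊗ V` and `x₂ ∈ V ⊗ R` of an element `x ∈ (R ⊗ V) ∩ (V ⊗ R)`. -/
def Theta (x₁ : (R : Submodule k (V ⊗[k] V)) ⊗[k] V)
    (x₂ : V ⊗[k] (R : Submodule k (V ⊗[k] V))) : V ⊗[k] (V ⊗[k] MonoidAlgebra k G) :=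
  (TensorProduct.map LinearMap.id (sigma k G V ρ))
      ((TensorProduct.assoc k V (MonoidAlgebra k G) V)
        ((TensorProduct.map α LinearMap.id) x₁))
    - (TensorProduct.map LinearMap.id α) x₂

/-- The extension of `α` to a right `kG`-module map `R ⊗ kG → V ⊗ kG`. -/
def αext : (R : Submodule k (V ⊗[k] V)) ⊗[k] MonoidAlgebra k G →ₗ[k]
    V ⊗[k] MonoidAlgebra k G :=
  (TensorProduct.map LinearMap.id (LinearMap.mul' k (MonoidAlgebra k G))).comp
    (((TensorProduct.assoc k V (MonoidAlgebra k G) (MonoidAlgebra k G)).toLinearMap).comp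
      (TensorProduct.map α LinearMap.id))

/-- The extension of `β` to a right `kG`-module map `R ⊗ kG → kG`. -/
def βext : (R : Submodule k (V ⊗[k] V)) ⊗[k] MonoidAlgebra k G →ₗ[k] MonoidAlgebra k G :=
  (LinearMap.mul' k (MonoidAlgebra k G)).comp (TensorProduct.map β LinearMap.id)

/-- The `g`-component `α_g : R → V` of `α`. -/
def αComp (g : G) : (R : Submodule k (V ⊗[k] V)) →ₗ[k] V :=
  ((TensorProduct.rid k V).toLinearMap.comp
    (TensorProduct.map LinearMap.id ((Finsupp.lapply g).comp (MonoidAlgebra.coeffLinearEquiv k).toLinearMap))).comp α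

/-- `Σ_{g ∈ G} α_g ⊗ λ(g ⊗ −)`, as a map `R ⊗ V → S ⋊ G`. -/
def sumAlphaLam [Fintype G] : (R : Submodule k (V ⊗[k] V)) ⊗[k] V →ₗ[k] SkewA k G V R ρ :=
  ∑ g : G, (embVGA k G V R ρ).comp
    (TensorProduct.map (αComp k G V R α g) (lamMk k G V lam g))

/-- The degree-`d` graded piece of `S ⋊ G = H_{0,0,0}`. -/
def grA (d : ℕ) : Submodule k (SkewA k G V R ρ) :=
  (grT k G V d).map (toH k G V R ρ 0 0 0).toLinearMap

end DeformKoszul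

open DeformKoszul

namespace DeformKoszul

section aux
set_option linter.unusedSectionVars false
variable (k G V : Type) [Field k] [Group G] [AddCommGroup V] [Module k V]

theorem grT_zero : grT k G V 0 =
    Subalgebra.toSubmodule (Algebra.adjoin k (Set.range (gIn k G V))) := by
  rw [grT]

theorem grT_succ (n : ℕ) : grT k G V (n+1) =
    grT k G V n * (LinearMap.range (vIn k G V) * grT k G V 0) := by
  conv_lhs => rw [grT]

theorem mem_grT_zero {x : FreeAlg k G V} (h : x ∈ grT k G V 0) :
    x ∈ Algebra.adjoin k (Set.range (gIn k G V)) := by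
  rwa [grT_zero] at h

theorem one_mem_grT : (1 : FreeAlg k G V) ∈ grT k G V 0 := by
  simp only [grT]
  exact Subalgebra.one_mem _

theorem gIn_mem (x : MonoidAlgebra k G) : gIn k G V x ∈ grT k G V 0 := by
  simp only [grT]
  exact Algebra.subset_adjoin ⟨x, rfl⟩

theorem vIn_mem (v : V) : vIn k G V v ∈ grT k G V 1 := by
  have : vIn k G V v = 1 * (vIn k G V v * 1) := by simp
  rw [this, grT_succ]
  exact Submodule.mul_mem_mul (one_mem_grT k G V)
    (Submodule.mul_mem_mul ⟨v, rfl⟩ (one_mem_grT k G V))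

theorem grT_zero_mul : grT k G V 0 * grT k G V 0 ≤ grT k G V 0 := by
  rw [Submodule.mul_le]
  intro a ha b hb
  simp only [grT] at *
  exact Subalgebra.mul_mem _ ha hb

theorem grT_mul (p q : ℕ) : grT k G V p * grT k G V q ≤ grT k G V (p + q) := by
  induction q with
  | zero =>
    cases p with
    | zero => exact grT_zero_mul k G V
    | succ n =>
      rw [Nat.add_zero, grT_succ, mul_assoc, mul_assoc]
      exact mul_le_mul_right (mul_le_mul_right (grT_zero_mul k G V) _) _
  | succ q ih =>
    rw [← Nat.add_assoc, grT_succ, grT_succ, ← mul_assoc]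
    exact mul_le_mul_left ih _

theorem grT_mul_mem {p q : ℕ} {x y : FreeAlg k G V} (hx : x ∈ grT k G V p)
    (hy : y ∈ grT k G V q) : x * y ∈ grT k G V (p + q) :=
  grT_mul k G V p q (Submodule.mul_mem_mul hx hy)

theorem filtT_le_iff (d : ℕ) (N : Submodule k (FreeAlg k G V)) :
    filtT k G V d ≤ N ↔ ∀ i ≤ d, grT k G V i ≤ N := by
  induction d with
  | zero => simp [filtT]
  | succ d ih =>
    simp only [filtT, sup_le_iff, ih]
    constructor
    · rintro ⟨h1, h2⟩ i hi
      rcases Nat.lt_or_ge i (d+1) with h | h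
      · exact h1 i (by omega)
      · obtain rfl : i = d + 1 := by omega
        exact h2
    · intro h
      exact ⟨fun i hi => h i (by omega), h _ le_rfl⟩

theorem grT_le_filtT {i d : ℕ} (h : i ≤ d) : grT k G V i ≤ filtT k G V d :=
  (filtT_le_iff k G V d _).1 le_rfl i h

theorem filtT_mono {i d : ℕ} (h : i ≤ d) : filtT k G V i ≤ filtT k G V d :=
  (filtT_le_iff k G V i _).2 fun _ hj => grT_le_filtT k G V (hj.trans h)

theorem filtT_mul_mem {p q : ℕ} {x y : FreeAlg k G V} (hx : x ∈ filtT k G V p)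
    (hy : y ∈ filtT k G V q) : x * y ∈ filtT k G V (p + q) := by
  have key : ∀ i ≤ p, ∀ a ∈ grT k G V i, filtT k G V q ≤
      (filtT k G V (p+q)).comap (LinearMap.mulLeft k a) := by
    intro i hi a ha
    rw [filtT_le_iff]
    intro j hj b hb
    exact grT_le_filtT k G V (Nat.add_le_add hi hj) (grT_mul_mem k G V ha hb)
  have : filtT k G V p ≤ (filtT k G V (p+q)).comap (LinearMap.mulRight k y) := by
    rw [filtT_le_iff]
    intro i hi a ha
    exact key i hi a ha hy
  exact this hx

theorem exists_filtT (x : FreeAlg k G V) : ∃ d, x ∈ filtT k G V d := by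
  induction x using TensorAlgebra.induction with
  | algebraMap r =>
    refine ⟨0, ?_⟩
    rw [Algebra.algebraMap_eq_smul_one]
    exact Submodule.smul_mem _ _ (one_mem_grT k G V)
  | ι m =>
    refine ⟨1, ?_⟩
    have : TensorAlgebra.ι k m = gIn k G V m.1 + vIn k G V m.2 := by
      simp [gIn, vIn, ← map_add]
    rw [this]
    exact Submodule.add_mem _ (grT_le_filtT k G V (by omega) (gIn_mem k G V _))
      (grT_le_filtT k G V le_rfl (vIn_mem k G V _))
  | mul a b ha hb =>
    obtain ⟨p, hp⟩ := ha
    obtain ⟨q, hq⟩ := hb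
    exact ⟨_, filtT_mul_mem k G V hp hq⟩
  | add a b ha hb =>
    obtain ⟨p, hp⟩ := ha
    obtain ⟨q, hq⟩ := hb
    exact ⟨max p q, Submodule.add_mem _ (filtT_mono k G V (le_max_left _ _) hp)
      (filtT_mono k G V (le_max_right _ _) hq)⟩

theorem mulVV_mem (r : V ⊗[k] V) : mulVV k G V r ∈ grT k G V 2 := by
  induction r using TensorProduct.induction_on with
  | zero => simp
  | tmul x y =>
    simpa [mulVV] using grT_mul_mem k G V (vIn_mem k G V x) (vIn_mem k G V y)
  | add x y hx hy => rw [map_add]; exact Submodule.add_mem _ hx hy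

theorem embVG_mem (r : V ⊗[k] MonoidAlgebra k G) : embVG k G V r ∈ grT k G V 1 := by
  induction r using TensorProduct.induction_on with
  | zero => simp
  | tmul x y =>
    simpa [embVG] using grT_mul_mem k G V (vIn_mem k G V x) (gIn_mem k G V y)
  | add x y hx hy => rw [map_add]; exact Submodule.add_mem _ hx hy

variable (R : Submodule k (V ⊗[k] V)) (ρ : Representation k G V)
  (lam : MonoidAlgebra k G ⊗[k] V →ₗ[k] MonoidAlgebra k G)
    (α : R →ₗ[k] (V ⊗[k] MonoidAlgebra k G))
    (β : R →ₗ[k] MonoidAlgebra k G)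

theorem filtH_mul_mem {p q : ℕ} {x y : HAlg k G V R ρ lam α β}
    (hx : x ∈ filtH k G V R ρ lam α β p) (hy : y ∈ filtH k G V R ρ lam α β q) :
    x * y ∈ filtH k G V R ρ lam α β (p + q) := by
  obtain ⟨a, ha, rfl⟩ := hx
  obtain ⟨b, hb, rfl⟩ := hy
  exact ⟨a * b, filtT_mul_mem k G V ha hb, by simp⟩

theorem filtH_mono {p q : ℕ} (h : p ≤ q) :
    filtH k G V R ρ lam α β p ≤ filtH k G V R ρ lam α β q :=
  Submodule.map_mono (filtT_mono k G V h)

theorem toH_surj : Function.Surjective (toH k G V R ρ lam α β) :=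
  RingQuot.mkAlgHom_surjective k _

theorem exists_filtH (x : HAlg k G V R ρ lam α β) : ∃ d, x ∈ filtH k G V R ρ lam α β d := by
  obtain ⟨a, rfl⟩ := toH_surj k G V R ρ lam α β x
  obtain ⟨d, hd⟩ := exists_filtT k G V a
  exact ⟨d, a, hd, rfl⟩

theorem toH_rel {x y : FreeAlg k G V} (h : GRel k G V R ρ lam α β x y) :
    toH k G V R ρ lam α β x = toH k G V R ρ lam α β y :=
  RingQuot.mkAlgHom_rel k h

theorem map_grT_zero : (grT k G V 0).map (toH k G V R ρ lam α β).toLinearMap ≤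
    LinearMap.range ((toH k G V R ρ lam α β).toLinearMap.comp (gIn k G V)) := by
  rintro _ ⟨x, hx, rfl⟩
  replace hx := mem_grT_zero k G V hx
  induction hx using Algebra.adjoin_induction with
  | mem x hx => obtain ⟨y, rfl⟩ := hx; exact ⟨y, rfl⟩
  | algebraMap r =>
    refine ⟨r • 1, ?_⟩
    have := toH_rel k G V R ρ lam α β GRel.unit
    simp [Algebra.algebraMap_eq_smul_one, this]
  | add x y _ _ hx hy => rw [map_add]; exact Submodule.add_mem _ hx hy
  | mul x y _ _ hx hy =>
    obtain ⟨a, ha⟩ := hx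
    obtain ⟨b, hb⟩ := hy
    refine ⟨a * b, ?_⟩
    have := toH_rel k G V R ρ lam α β (GRel.gmul a b)
    simp only [LinearMap.comp_apply, AlgHom.toLinearMap_apply, map_mul] at *
    rw [← this, ha, hb]

theorem map_grT_fg [Finite G] [FiniteDimensional k V] (d : ℕ) :
    ((grT k G V d).map (toH k G V R ρ lam α β).toLinearMap).FG := by
  have h0 : ((grT k G V 0).map (toH k G V R ρ lam α β).toLinearMap).FG := by
    have : FiniteDimensional k (MonoidAlgebra k G) :=
      Module.Finite.equiv (MonoidAlgebra.coeffLinearEquiv (R := k) (S := k) (M := G)).symm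
    have h1 : FiniteDimensional k (LinearMap.range
      ((toH k G V R ρ lam α β).toLinearMap.comp (gIn k G V))) := inferInstance
    have := Submodule.finiteDimensional_of_le (map_grT_zero k G V R ρ lam α β)
    exact Module.Finite.iff_fg.1 this
  induction d with
  | zero => exact h0
  | succ d ih =>
    simp only [grT_succ, Submodule.map_mul] at *
    refine ih.mul (Submodule.FG.mul ?_ h0)
    exact Submodule.FG.map _ (Module.Finite.iff_fg.1 inferInstance)

theorem filtH_finite [Finite G] [FiniteDimensional k V] (d : ℕ) :
    FiniteDimensional k (filtH k G V R ρ lam α β d) := by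
  refine Module.Finite.iff_fg.2 ?_
  induction d with
  | zero => exact map_grT_fg k G V R ρ lam α β 0
  | succ d ih =>
    simp only [filtH, filtT, Submodule.map_sup] at *
    exact ih.sup (map_grT_fg k G V R ρ lam α β (d+1))

/-- The free algebra to `H[X]`. -/
def Phi : FreeAlg k G V →ₐ[k] Polynomial (HAlg k G V R ρ lam α β) :=
  TensorAlgebra.lift k (LinearMap.coprod
    ((Polynomial.monomial 0).restrictScalars k ∘ₗ
      ((toH k G V R ρ lam α β).toLinearMap.comp (gIn k G V)))
    ((Polynomial.monomial 1).restrictScalars k ∘ₗ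
      ((toH k G V R ρ lam α β).toLinearMap.comp (vIn k G V))))

theorem Phi_g (x) : Phi k G V R ρ lam α β (gIn k G V x) =
    Polynomial.monomial 0 (toH k G V R ρ lam α β (gIn k G V x)) := by
  simp [Phi, gIn]

theorem Phi_v (x) : Phi k G V R ρ lam α β (vIn k G V x) =
    Polynomial.monomial 1 (toH k G V R ρ lam α β (vIn k G V x)) := by
  simp [Phi, vIn]

theorem Phi_gr (d : ℕ) : ∀ x ∈ grT k G V d, Phi k G V R ρ lam α β x =
    Polynomial.monomial d (toH k G V R ρ lam α β x) := by
  have h0 : ∀ x ∈ grT k G V 0, Phi k G V R ρ lam α β x =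
    Polynomial.monomial 0 (toH k G V R ρ lam α β x) := by
    intro x hx
    replace hx := mem_grT_zero k G V hx
    induction hx using Algebra.adjoin_induction with
    | mem x hx => obtain ⟨y, rfl⟩ := hx; exact Phi_g ..
    | algebraMap r => simp [Polynomial.monomial_zero_left, Polynomial.algebraMap_apply]
    | add x y _ _ hx hy => simp [hx, hy]
    | mul x y _ _ hx hy => simp [hx, hy]
  induction d with
  | zero => exact h0
  | succ d ih =>
    intro x hx
    rw [grT_succ] at hx
    induction hx using Submodule.mul_induction_on' with
    | add x _ y _ hx hy => simp [hx, hy]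
    | mem_mul_mem a ha b hb =>
      induction hb using Submodule.mul_induction_on' with
      | add x _ y _ hx hy => rw [mul_add, map_add, hx, hy, map_add, map_add]
      | mem_mul_mem v hv c hc =>
        obtain ⟨v, rfl⟩ := hv
        simp only [map_mul, ih a ha, h0 c hc, Phi_v, Polynomial.monomial_mul_monomial, add_zero]

theorem Phi_coeff_mem (x : FreeAlg k G V) (n : ℕ) :
    (Phi k G V R ρ lam α β x).coeff n ∈ filtH k G V R ρ lam α β n := by
  obtain ⟨d, hd⟩ := exists_filtT k G V x
  have : filtT k G V d ≤ (filtH k G V R ρ lam α β n).comap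
      ((Polynomial.lcoeff _ n).restrictScalars k ∘ₗ (Phi k G V R ρ lam α β).toLinearMap) := by
    rw [filtT_le_iff]
    intro i _ a ha
    simp only [Submodule.mem_comap, LinearMap.comp_apply, AlgHom.toLinearMap_apply,
      Phi_gr k G V R ρ lam α β i a ha, LinearMap.restrictScalars_apply, Polynomial.lcoeff_apply,
      Polynomial.coeff_monomial]
    split_ifs with h
    · subst h; exact ⟨a, grT_le_filtT k G V le_rfl ha, rfl⟩
    · exact Submodule.zero_mem _
  exact this hd

/-- Shifted filtration. -/
def filtH' : ℕ → Submodule k (HAlg k G V R ρ lam α β)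
  | 0 => ⊥
  | n+1 => filtH k G V R ρ lam α β n

theorem filtH'_mul_mem {p q : ℕ} {x y : HAlg k G V R ρ lam α β}
    (hx : x ∈ filtH' k G V R ρ lam α β p) (hy : y ∈ filtH k G V R ρ lam α β q) :
    x * y ∈ filtH' k G V R ρ lam α β (p + q) := by
  cases p with
  | zero => 
    simp only [filtH', Submodule.mem_bot] at hx
    simp [hx]
  | succ p =>
    rw [Nat.add_right_comm]
    exact filtH_mul_mem k G V R ρ lam α β hx hy

theorem filtH'_mul_mem' {p q : ℕ} {x y : HAlg k G V R ρ lam α β}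
    (hx : x ∈ filtH k G V R ρ lam α β p) (hy : y ∈ filtH' k G V R ρ lam α β q) :
    x * y ∈ filtH' k G V R ρ lam α β (p + q) := by
  cases q with
  | zero => 
    simp only [filtH', Submodule.mem_bot] at hy
    simp [hy]
  | succ q => exact filtH_mul_mem k G V R ρ lam α β hx hy

/-- The ideal of elements whose symbol drops degree. -/
def JId : Ideal (FreeAlg k G V) where
  carrier := {x | ∀ n, (Phi k G V R ρ lam α β x).coeff n ∈ filtH' k G V R ρ lam α β n}
  add_mem' := by
    intro a b ha hb n
    rw [map_add, Polynomial.coeff_add]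
    exact Submodule.add_mem _ (ha n) (hb n)
  zero_mem' := by intro n; simp
  smul_mem' := by
    intro c x hx n
    rw [smul_eq_mul, map_mul, Polynomial.coeff_mul]
    refine Submodule.sum_mem _ fun ij hij => ?_
    rw [← Finset.HasAntidiagonal.mem_antidiagonal.1 hij]
    exact filtH'_mul_mem' k G V R ρ lam α β (Phi_coeff_mem ..) (hx _)

instance : (JId k G V R ρ lam α β).IsTwoSided where
  mul_mem_of_left := by
    intro a b ha n
    rw [map_mul, Polynomial.coeff_mul]
    refine Submodule.sum_mem _ fun ij hij => ?_
    rw [← Finset.HasAntidiagonal.mem_antidiagonal.1 hij]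
    exact filtH'_mul_mem k G V R ρ lam α β (ha _) (Phi_coeff_mem ..)

theorem mem_JId_of_gr {d : ℕ} {x : FreeAlg k G V} (hx : x ∈ grT k G V d) :
    x ∈ JId k G V R ρ lam α β ↔ toH k G V R ρ lam α β x ∈ filtH' k G V R ρ lam α β d := by
  change (∀ n, (Phi k G V R ρ lam α β x).coeff n ∈ filtH' k G V R ρ lam α β n) ↔ _
  rw [Phi_gr k G V R ρ lam α β d x hx]
  constructor
  · intro h; simpa using h d
  · intro h n
    rw [Polynomial.coeff_monomial]
    split_ifs with h'
    · exact h' ▸ h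
    · exact Submodule.zero_mem _

theorem rel_JId {x y : FreeAlg k G V} (h : GRel k G V R ρ 0 0 0 x y) :
    x - y ∈ JId k G V R ρ lam α β := by
  cases h with
  | unit =>
    rw [mem_JId_of_gr k G V R ρ lam α β
      (Submodule.sub_mem _ (gIn_mem k G V 1) (one_mem_grT k G V)), map_sub,
      toH_rel k G V R ρ lam α β GRel.unit, sub_self]
    exact Submodule.zero_mem _
  | gmul a b =>
    rw [mem_JId_of_gr k G V R ρ lam α β
      (Submodule.sub_mem _ (grT_mul_mem k G V (gIn_mem k G V a) (gIn_mem k G V b))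
        (gIn_mem k G V _)), map_sub,
      toH_rel k G V R ρ lam α β (GRel.gmul a b), sub_self]
    exact Submodule.zero_mem _
  | act g v =>
    have h1 := grT_mul_mem k G V (gIn_mem k G V (MonoidAlgebra.of k G g)) (vIn_mem k G V v)
    have h2 := grT_mul_mem k G V (vIn_mem k G V (ρ g v)) (gIn_mem k G V (MonoidAlgebra.of k G g))
    rw [LinearMap.zero_apply, map_zero, add_zero,
      mem_JId_of_gr k G V R ρ lam α β (d := 1) (Submodule.sub_mem _ h1 h2), map_sub,
      toH_rel k G V R ρ lam α β (GRel.act g v), map_add, add_sub_cancel_left]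
    exact ⟨_, gIn_mem k G V _, rfl⟩
  | quad r =>
    rw [LinearMap.zero_apply, map_zero, LinearMap.zero_apply, map_zero, add_zero, sub_zero,
      mem_JId_of_gr k G V R ρ lam α β (mulVV_mem k G V _),
      toH_rel k G V R ρ lam α β (GRel.quad r)]
    exact ⟨_, Submodule.add_mem _ (grT_le_filtT k G V le_rfl (embVG_mem k G V _))
      (grT_le_filtT k G V zero_le_one (gIn_mem k G V _)), rfl⟩

theorem ker_toA {d : ℕ} {x : FreeAlg k G V} (hx : x ∈ grT k G V d)
    (h : toH k G V R ρ 0 0 0 x = 0) :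
    toH k G V R ρ lam α β x ∈ filtH' k G V R ρ lam α β d := by
  rw [← mem_JId_of_gr k G V R ρ lam α β hx]
  let π : SkewA k G V R ρ →ₐ[k] (FreeAlg k G V ⧸ JId k G V R ρ lam α β) :=
    RingQuot.liftAlgHom k ⟨Ideal.Quotient.mkₐ k (JId k G V R ρ lam α β), fun x y hxy =>
      Ideal.Quotient.eq.2 (rel_JId k G V R ρ lam α β hxy)⟩
  have : π (toH k G V R ρ 0 0 0 x) = Ideal.Quotient.mkₐ k (JId k G V R ρ lam α β) x :=
    RingQuot.liftAlgHom_mkAlgHom_apply ..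
  rw [h, map_zero] at this
  exact Ideal.Quotient.eq_zero_iff_mem.1 this.symm

/-- The grading map `A → A[X]`. -/
def phiA : SkewA k G V R ρ →ₐ[k] Polynomial (SkewA k G V R ρ) :=
  RingQuot.liftAlgHom k ⟨Phi k G V R ρ 0 0 0, by
    have key : ∀ (d : ℕ) (x y : FreeAlg k G V), x ∈ grT k G V d → y ∈ grT k G V d →
        GRel k G V R ρ 0 0 0 x y → Phi k G V R ρ 0 0 0 x = Phi k G V R ρ 0 0 0 y := by
      intro d x y hx hy h
      rw [Phi_gr _ _ _ _ _ _ _ _ d x hx, Phi_gr _ _ _ _ _ _ _ _ d y hy, toH_rel _ _ _ _ _ _ _ _ h]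
    intro x y h
    have h' := h
    cases h with
    | unit => exact key 0 _ _ (gIn_mem ..) (one_mem_grT ..) h'
    | gmul a b => exact key 0 _ _ (grT_mul_mem k G V (gIn_mem ..) (gIn_mem ..)) (gIn_mem ..) h'
    | act g v =>
      refine key 1 _ _ (grT_mul_mem k G V (gIn_mem ..) (vIn_mem ..)) ?_ h'
      rw [LinearMap.zero_apply, map_zero, add_zero]
      exact grT_mul_mem k G V (vIn_mem ..) (gIn_mem ..)
    | quad r =>
      refine key 2 _ _ (mulVV_mem ..) ?_ h'
      simp⟩

theorem phiA_gr {d : ℕ} {a : SkewA k G V R ρ} (ha : a ∈ grA k G V R ρ d) :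
    phiA k G V R ρ a = Polynomial.monomial d a := by
  obtain ⟨x, hx, rfl⟩ := ha
  exact (RingQuot.liftAlgHom_mkAlgHom_apply ..).trans (Phi_gr k G V R ρ 0 0 0 d x hx)

/-- component maps -/
def compA (e : ℕ) : SkewA k G V R ρ →ₗ[k] SkewA k G V R ρ :=
  (Polynomial.lcoeff _ e).restrictScalars k ∘ₗ (phiA k G V R ρ).toLinearMap

theorem compA_gr {d : ℕ} {a : SkewA k G V R ρ} (ha : a ∈ grA k G V R ρ d) (e : ℕ) :
    compA k G V R ρ e a = if d = e then a else 0 := by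
  simp [compA, phiA_gr k G V R ρ ha, Polynomial.coeff_monomial]

end aux
end DeformKoszul

namespace DeformKoszul

section abstr
variable {k A : Type} [Field k] [Ring A] [Algebra k A]
  (Gr : ℕ → Submodule k A) (comp : ℕ → A →ₗ[k] A)

theorem internal_of_comp
    (hcomp : ∀ d, ∀ a ∈ Gr d, ∀ e, comp e a = if d = e then a else 0)
    (htop : ⨆ d, Gr d = ⊤) :
    Function.Bijective (DirectSum.coeLinearMap Gr) := by
  constructor
  · rw [injective_iff_map_eq_zero]
    intro x hx
    have key : ∀ e, comp e ∘ₗ DirectSum.coeLinearMap Gr =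
        (Gr e).subtype ∘ₗ DirectSum.component k ℕ (fun i => Gr i) e := by
      intro e
      refine DirectSum.linearMap_ext k fun d => ?_
      ext a
      simp only [LinearMap.comp_apply, DirectSum.coeLinearMap_lof, Submodule.subtype_apply]
      rw [hcomp d a a.2, DirectSum.component.of]
      split_ifs with h
      · subst h; rfl
      · rfl
    refine DFinsupp.ext fun e => ?_
    have := LinearMap.congr_fun (key e) x
    simp only [LinearMap.comp_apply, hx, map_zero] at this
    exact Subtype.ext this.symm
  · rw [← LinearMap.range_eq_top]
    exact (Submodule.iSup_eq_range_dfinsupp_lsum Gr).symm.trans htop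

theorem exists_sect {M N : Type} [AddCommGroup M] [Module k M] [AddCommGroup N] [Module k N]
    (t : M →ₗ[k] N) (P : Submodule k M) :
    ∃ l : P.map t →ₗ[k] M, ∀ a, l a ∈ P ∧ t (l a) = a := by
  obtain ⟨l, hl⟩ := (t.submoduleMap P).exists_rightInverse_of_surjective
    (LinearMap.range_eq_top.2 (LinearMap.submoduleMap_surjective _ _))
  refine ⟨P.subtype ∘ₗ l, fun a => ⟨(l a).2, ?_⟩⟩
  exact congrArg Subtype.val (LinearMap.congr_fun hl a)

theorem inj_of_rank {M N : Type} [AddCommGroup M] [Module k M] [AddCommGroup N] [Module k N]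
    (t : M →ₗ[k] N) (P : Submodule k M) [FiniteDimensional k P]
    (h : Module.finrank k (P.map t) = Module.finrank k P) (a : M) (ha : a ∈ P) (h0 : t a = 0) :
    a = 0 := by
  have hrk := LinearMap.finrank_range_add_finrank_ker (t.domRestrict P)
  rw [LinearMap.range_domRestrict, h, Nat.add_eq_left, Submodule.finrank_eq_zero] at hrk
  have h1 : (⟨a, ha⟩ : P) ∈ LinearMap.ker (t.domRestrict P) := h0
  rw [hrk, Submodule.mem_bot] at h1
  exact congrArg Subtype.val h1

theorem exists_lin
    (hcomp : ∀ d, ∀ a ∈ Gr d, ∀ e, comp e a = if d = e then a else 0)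
    (htop : ⨆ d, Gr d = ⊤) {M : Type} [AddCommGroup M] [Module k M]
    (s : ∀ d, Gr d →ₗ[k] M) :
    ∃ t : A →ₗ[k] M, ∀ d (a : A) (ha : a ∈ Gr d), t a = s d ⟨a, ha⟩ := by
  let e := LinearEquiv.ofBijective _ (internal_of_comp Gr comp hcomp htop)
  refine ⟨DirectSum.toModule k ℕ M s ∘ₗ e.symm.toLinearMap, fun d a ha => ?_⟩
  have : e.symm a = DirectSum.lof k ℕ (fun i => Gr i) d ⟨a, ha⟩ := by
    rw [LinearEquiv.symm_apply_eq]
    exact (DirectSum.coeLinearMap_lof Gr d ⟨a, ha⟩).symm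
  simp [this]

theorem gr_ind (htop : ⨆ d, Gr d = ⊤) {P : A → Prop} (h : ∀ d, ∀ a ∈ Gr d, P a)
    (hadd : ∀ a b, P a → P b → P (a + b)) (a : A) : P a :=
  Submodule.iSup_induction Gr (motive := P) (htop ▸ Submodule.mem_top : a ∈ ⨆ d, Gr d)
    (fun i x hx => h i x hx) (h 0 0 (Submodule.zero_mem _)) hadd

theorem comp_mem
    (hcomp : ∀ d, ∀ a ∈ Gr d, ∀ e, comp e a = if d = e then a else 0)
    (htop : ⨆ d, Gr d = ⊤) (e : ℕ) (a : A) : comp e a ∈ Gr e := by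
  refine gr_ind Gr htop (P := fun a => comp e a ∈ Gr e) ?_ ?_ a
  · intro d a ha
    rw [hcomp d a ha]
    split_ifs with h
    · exact h ▸ ha
    · exact Submodule.zero_mem _
  · intro a b ha hb
    rw [map_add]
    exact Submodule.add_mem _ ha hb

theorem comp_sum
    (hcomp : ∀ d, ∀ a ∈ Gr d, ∀ e, comp e a = if d = e then a else 0)
    (htop : ⨆ d, Gr d = ⊤) (a : A) (N : ℕ) (hN : ∀ e, N ≤ e → comp e a = 0) :
    ∑ e ∈ Finset.range N, comp e a = a := by
  have : ∀ a : A, ∃ M, ∀ N, M ≤ N → ∑ e ∈ Finset.range N, comp e a = a := by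
    intro a
    refine gr_ind Gr htop
      (P := fun a => ∃ M, ∀ N, M ≤ N → ∑ e ∈ Finset.range N, comp e a = a) ?_ ?_ a
    · intro d a ha
      refine ⟨d + 1, fun N hN => ?_⟩
      simp only [hcomp d a ha]
      rw [Finset.sum_ite_eq, if_pos (by simp; omega)]
    · rintro a b ⟨M, hM⟩ ⟨M', hM'⟩
      refine ⟨max M M', fun N hN => ?_⟩
      simp only [map_add, Finset.sum_add_distrib]
      rw [hM N (le_trans (le_max_left _ _) hN), hM' N (le_trans (le_max_right _ _) hN)]
  obtain ⟨M, hM⟩ := this a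
  rw [← hM (max M N) (le_max_left _ _)]
  conv_lhs => rw [hM (max M N) (le_max_left _ _)]
  refine Finset.sum_subset (Finset.range_mono (le_max_right _ _)) ?_
  intro e _ he
  exact hN e (by simpa using he)

theorem star_abstract
    (hcomp : ∀ d, ∀ a ∈ Gr d, ∀ e, comp e a = if d = e then a else 0)
    (htop : ⨆ d, Gr d = ⊤) (h1 : (1 : A) ∈ Gr 0)
    (st : A →ₗ[k] A →ₗ[k] A)
    (hassoc : ∀ a b c, st (st a b) c = st a (st b c))
    (hone : ∀ a, st 1 a = a) (hone' : ∀ a, st a 1 = a)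
    (hlow : ∀ p q, ∀ a ∈ Gr p, ∀ b ∈ Gr q, ∀ e, p + q < e → comp e (st a b) = 0)
    (hlead : ∀ p q, ∀ a ∈ Gr p, ∀ b ∈ Gr q, comp (p + q) (st a b) = a * b) :
    ∃ μ : ℕ → (A ⊗[k] A →ₗ[k] A),
      μ 0 = LinearMap.mul' k A ∧
      (∀ j, 1 ≤ j → ∀ a : A, μ j ((1 : A) ⊗ₜ[k] a) = 0 ∧ μ j (a ⊗ₜ[k] (1 : A)) = 0) ∧
      (∀ (j p q : ℕ) (a b : A), a ∈ Gr p → b ∈ Gr q →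
        μ j (a ⊗ₜ[k] b) ∈ Gr (p + q - j) ∧ (p + q < j → μ j (a ⊗ₜ[k] b) = 0)) ∧
      (∀ (n : ℕ) (a b c : A),
        ∑ ij ∈ Finset.HasAntidiagonal.antidiagonal n, μ ij.1 (μ ij.2 (a ⊗ₜ[k] b) ⊗ₜ[k] c)
          = ∑ ij ∈ Finset.HasAntidiagonal.antidiagonal n,
              μ ij.1 (a ⊗ₜ[k] μ ij.2 (b ⊗ₜ[k] c))) ∧
      ∀ a b, st a b = ∑ᶠ j : ℕ, μ j (a ⊗ₜ[k] b) := by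
  have hex : ∀ j : ℕ, ∃ m : A ⊗[k] A →ₗ[k] A, ∀ p q, ∀ a ∈ Gr p, ∀ b ∈ Gr q,
      m (a ⊗ₜ[k] b) = if j ≤ p + q then comp (p + q - j) (st a b) else 0 := by
    intro j
    have hp : ∀ p, ∃ t : A →ₗ[k] (A →ₗ[k] A), ∀ q, ∀ b ∈ Gr q, ∀ a,
        t b a = if j ≤ p + q then comp (p + q - j) (st a b) else 0 := by
      intro p
      obtain ⟨t, ht⟩ := exists_lin Gr comp hcomp htop (M := A →ₗ[k] A)
        (fun q => if j ≤ p + q then (st.compr₂ (comp (p + q - j))).flip ∘ₗ (Gr q).subtype else 0)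
      refine ⟨t, fun q b hb a => ?_⟩
      rw [ht q b hb]
      split_ifs <;> simp
    choose t ht using hp
    obtain ⟨u, hu⟩ := exists_lin Gr comp hcomp htop (M := A →ₗ[k] A)
        (fun p => (t p).flip ∘ₗ (Gr p).subtype)
    refine ⟨TensorProduct.lift u, fun p q a ha b hb => ?_⟩
    rw [TensorProduct.lift.tmul, hu p a ha]
    simpa using ht p q b hb a
  choose μ hμ using hex
  have hmem := comp_mem Gr comp hcomp htop
  have hsum := comp_sum Gr comp hcomp htop
  have hgr : ∀ (j p q : ℕ) (a b : A), a ∈ Gr p → b ∈ Gr q →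
        μ j (a ⊗ₜ[k] b) ∈ Gr (p + q - j) ∧ (p + q < j → μ j (a ⊗ₜ[k] b) = 0) := by
    intro j p q a b ha hb
    rw [hμ j p q a ha b hb]
    refine ⟨?_, fun h => if_neg (by omega)⟩
    split_ifs
    · exact hmem _ _
    · exact Submodule.zero_mem _
  refine ⟨μ, ?_, ?_, hgr, ?_, ?_⟩
  · refine TensorProduct.ext' fun a b => ?_
    rw [LinearMap.mul'_apply]
    refine gr_ind Gr htop (P := fun a => μ 0 (a ⊗ₜ[k] b) = a * b) ?_ ?_ a
    · intro p a ha
      refine gr_ind Gr htop (P := fun b => μ 0 (a ⊗ₜ[k] b) = a * b) ?_ ?_ b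
      · intro q b hb
        rw [hμ 0 p q a ha b hb, if_pos (by omega), Nat.sub_zero, hlead p q a ha b hb]
      · intro b b' h h'
        rw [TensorProduct.tmul_add, map_add, h, h', mul_add]
    · intro b b' h h'
      rw [TensorProduct.add_tmul, map_add, h, h', add_mul]
  · intro j hj a
    refine gr_ind Gr htop (P := fun a => μ j ((1 : A) ⊗ₜ[k] a) = 0 ∧
      μ j (a ⊗ₜ[k] (1 : A)) = 0) ?_ ?_ a
    · intro p a ha
      rw [hμ j 0 p 1 h1 a ha, hμ j p 0 a ha 1 h1, hone, hone', hcomp p a ha, hcomp p a ha]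
      constructor <;> split_ifs <;> first | rfl | omega
    · rintro b b' ⟨h, h'⟩ ⟨h'', h'''⟩
      rw [TensorProduct.add_tmul, TensorProduct.tmul_add, map_add, map_add, h, h', h'', h''']
      simp
  · intro n a b c
    have hadd : ∀ (i : ℕ) (x y z : A), μ i ((x + y) ⊗ₜ[k] z) = μ i (x ⊗ₜ[k] z) + μ i (y ⊗ₜ[k] z) :=
      fun i x y z => by rw [TensorProduct.add_tmul, map_add]
    have hadd' : ∀ (i : ℕ) (x y z : A), μ i (z ⊗ₜ[k] (x + y)) = μ i (z ⊗ₜ[k] x) + μ i (z ⊗ₜ[k] y) :=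
      fun i x y z => by rw [TensorProduct.tmul_add, map_add]
    refine gr_ind Gr htop (P := fun a => ∑ ij ∈ Finset.HasAntidiagonal.antidiagonal n,
      μ ij.1 (μ ij.2 (a ⊗ₜ[k] b) ⊗ₜ[k] c) = ∑ ij ∈ Finset.HasAntidiagonal.antidiagonal n,
              μ ij.1 (a ⊗ₜ[k] μ ij.2 (b ⊗ₜ[k] c))) ?_ ?_ a
    swap
    · intro x y hx hy
      simp only [hadd, Finset.sum_add_distrib, hx, hy]
    intro p a ha
    refine gr_ind Gr htop (P := fun b => ∑ ij ∈ Finset.HasAntidiagonal.antidiagonal n,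
      μ ij.1 (μ ij.2 (a ⊗ₜ[k] b) ⊗ₜ[k] c) = ∑ ij ∈ Finset.HasAntidiagonal.antidiagonal n,
              μ ij.1 (a ⊗ₜ[k] μ ij.2 (b ⊗ₜ[k] c))) ?_ ?_ b
    swap
    · intro x y hx hy
      simp only [hadd, hadd', Finset.sum_add_distrib, hx, hy]
    intro q b hb
    refine gr_ind Gr htop (P := fun c => ∑ ij ∈ Finset.HasAntidiagonal.antidiagonal n,
      μ ij.1 (μ ij.2 (a ⊗ₜ[k] b) ⊗ₜ[k] c) = ∑ ij ∈ Finset.HasAntidiagonal.antidiagonal n,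
              μ ij.1 (a ⊗ₜ[k] μ ij.2 (b ⊗ₜ[k] c))) ?_ ?_ c
    swap
    · intro x y hx hy
      simp only [hadd', Finset.sum_add_distrib, hx, hy]
    intro r c hc
    -- generic computation
    have gen : ∀ (m r : ℕ) (w : A), (∀ e, m < e → comp e w = 0) →
        ∀ (T : A →ₗ[k] A), (∀ e, ∀ x ∈ Gr e, ∀ e', e + r < e' → comp e' (T x) = 0) →
        ∀ (ν : ℕ → A → A), (∀ i, ν i 0 = 0) → (∀ i e, ∀ x ∈ Gr e, ν i x =
          if i ≤ e + r then comp (e + r - i) (T x) else 0) →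
        ∑ ij ∈ Finset.HasAntidiagonal.antidiagonal n,
          ν ij.1 (if ij.2 ≤ m then comp (m - ij.2) w else 0) =
        if n ≤ m + r then comp (m + r - n) (T w) else 0 := by
      intro m r w hw T hT ν hν0 hν
      have e1 : ∀ ij ∈ Finset.HasAntidiagonal.antidiagonal n,
          ν ij.1 (if ij.2 ≤ m then comp (m - ij.2) w else 0) =
          if ij.2 ≤ m then (if n ≤ m + r then comp (m + r - n) (T (comp (m - ij.2) w)) else 0)
            else 0 := by
        intro ij hij
        have hij := Finset.HasAntidiagonal.mem_antidiagonal.1 hij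
        split_ifs with h2 h3
        · rw [hν _ _ _ (hmem _ _), if_pos (by omega)]
          congr 2
          omega
        · rw [hν _ _ _ (hmem _ _), if_neg (by omega)]
        · exact hν0 _
      rw [Finset.sum_congr rfl e1]
      split_ifs with h
      swap
      · simp
      rw [Finset.Nat.sum_antidiagonal_eq_sum_range_succ_mk]
      rw [← Finset.sum_range_reflect]
      have e2 : comp (m + r - n) (T w) = ∑ j ∈ Finset.range (m + 1),
          comp (m + r - n) (T (comp (m - j) w)) := by
        conv_lhs => rw [← hsum w (m + 1) (fun e he => hw e (by omega))]
        rw [← Finset.sum_range_reflect, map_sum, map_sum]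
        refine Finset.sum_congr rfl fun j _ => ?_
        congr 4
      have e3 : ∀ N, ∑ j ∈ Finset.range (m + 1), comp (m + r - n) (T (comp (m - j) w)) =
          ∑ j ∈ Finset.range (m + 1 + N), if j ≤ m then
            comp (m + r - n) (T (comp (m - j) w)) else 0 := by
        intro N
        rw [Finset.sum_congr rfl (g := fun j => if j ≤ m then
            comp (m + r - n) (T (comp (m - j) w)) else 0)
          (fun j hj => (if_pos (by have := Finset.mem_range.1 hj; omega)).symm)]
        refine Finset.sum_subset (Finset.range_mono (by omega)) fun j _ hj => ?_
        rw [if_neg]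
        have := Finset.mem_range.not.1 hj
        omega
      rw [e2, e3 n]
      trans ∑ j ∈ Finset.range (n + 1), if j ≤ m then
            comp (m + r - n) (T (comp (m - j) w)) else 0
      · refine Finset.sum_congr rfl fun j hj => ?_
        have := Finset.mem_range.1 hj
        have h' : n - (n.succ - 1 - j) = j := by omega
        rw [h']
      · refine Finset.sum_subset (Finset.range_mono (by omega)) fun j _ hj => ?_
        have := Finset.mem_range.not.1 hj
        split_ifs with h'
        · exact hT _ _ (hmem _ _) _ (by omega)
        · rfl
    have L := gen (p + q) r (st a b) (hlow p q a ha b hb) (st.flip c)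
      (fun e x hx e' he' => hlow e r x hx c hc e' he') (fun i x => μ i (x ⊗ₜ[k] c))
      (fun i => by simp) (fun i e x hx => hμ i e r x hx c hc)
    have L' := gen (q + r) p (st b c) (hlow q r b hb c hc) (st a)
      (fun e x hx e' he' => hlow p e a ha x hx e' (by omega)) (fun i x => μ i (a ⊗ₜ[k] x))
      (fun i => by simp) (fun i e x hx => by rw [hμ i p e a ha x hx, add_comm])
    simp only [hμ _ p q a ha b hb, hμ _ q r b hb c hc]
    refine L.trans (Eq.trans ?_ L'.symm)
    rw [LinearMap.flip_apply, hassoc, show q + r + p = p + q + r by omega]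
  · intro a b
    suffices h : (Function.support fun j => μ j (a ⊗ₜ[k] b)).Finite ∧
      st a b = ∑ᶠ j : ℕ, μ j (a ⊗ₜ[k] b) from h.2
    refine gr_ind Gr htop (P := fun a => (Function.support fun j => μ j (a ⊗ₜ[k] b)).Finite ∧
      st a b = ∑ᶠ j : ℕ, μ j (a ⊗ₜ[k] b)) ?_ ?_ a
    swap
    · rintro x y ⟨hx, hx'⟩ ⟨hy, hy'⟩
      simp only [TensorProduct.add_tmul, map_add]
      exact ⟨(hx.union hy).subset (Function.support_add _ _), by
        rw [finsum_add_distrib hx hy, LinearMap.add_apply, hx', hy']⟩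
    intro p a ha
    refine gr_ind Gr htop (P := fun b => (Function.support fun j => μ j (a ⊗ₜ[k] b)).Finite ∧
      st a b = ∑ᶠ j : ℕ, μ j (a ⊗ₜ[k] b)) ?_ ?_ b
    swap
    · rintro x y ⟨hx, hx'⟩ ⟨hy, hy'⟩
      simp only [TensorProduct.tmul_add, map_add]
      exact ⟨(hx.union hy).subset (Function.support_add _ _), by
        rw [finsum_add_distrib hx hy, hx', hy']⟩
    intro q b hb
    have hsub : (Function.support fun j => μ j (a ⊗ₜ[k] b)) ⊆ (Finset.range (p + q + 1) : Set ℕ) := by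
      intro j hj
      by_contra h
      have h := Finset.mem_range.not.1 (fun h' => h (Finset.mem_coe.2 h'))
      exact hj ((hgr j p q a b ha hb).2 (by omega))
    refine ⟨(Finset.finite_toSet _).subset hsub, ?_⟩
    rw [finsum_eq_sum_of_support_subset _ hsub]
    rw [← Finset.sum_range_reflect]
    conv_lhs => rw [← hsum (st a b) (p + q + 1)
      (fun e he => hlow p q a ha b hb e (by omega))]
    refine Finset.sum_congr rfl fun j hj => ?_
    have := Finset.mem_range.1 hj
    rw [hμ _ p q a ha b hb, if_pos (by omega)]
    congr 2
    omega

end abstr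

section main
variable (k G V : Type) [Field k] [Group G] [AddCommGroup V] [Module k V]
variable (R : Submodule k (V ⊗[k] V)) (ρ : Representation k G V)
  (lam : MonoidAlgebra k G ⊗[k] V →ₗ[k] MonoidAlgebra k G)
    (α : R →ₗ[k] (V ⊗[k] MonoidAlgebra k G))
    (β : R →ₗ[k] MonoidAlgebra k G)

theorem filtA_comp {d : ℕ} {a : SkewA k G V R ρ} (ha : a ∈ filtH k G V R ρ 0 0 0 d) {e : ℕ}
    (he : d < e) : compA k G V R ρ e a = 0 := by
  obtain ⟨x, hx, rfl⟩ := ha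
  have : filtT k G V d ≤ LinearMap.ker
      (compA k G V R ρ e ∘ₗ (toH k G V R ρ 0 0 0).toLinearMap) := by
    rw [filtT_le_iff]
    intro i hi y hy
    rw [LinearMap.mem_ker, LinearMap.comp_apply,
      compA_gr k G V R ρ (d := i) ⟨y, hy, rfl⟩, if_neg (by omega)]
  exact this hx

theorem filtA'_comp {d : ℕ} {a : SkewA k G V R ρ} (ha : a ∈ filtH' k G V R ρ 0 0 0 d) {e : ℕ}
    (he : d ≤ e) : compA k G V R ρ e a = 0 := by
  cases d with
  | zero =>
    simp only [filtH', Submodule.mem_bot] at ha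
    rw [ha, map_zero]
  | succ d => exact filtA_comp k G V R ρ ha (by omega)

theorem grA_top : ⨆ d, grA k G V R ρ d = ⊤ := by
  rw [eq_top_iff]
  rintro a -
  obtain ⟨x, rfl⟩ := toH_surj k G V R ρ 0 0 0 a
  obtain ⟨d, hd⟩ := exists_filtT k G V x
  have : filtT k G V d ≤ (⨆ d, grA k G V R ρ d).comap (toH k G V R ρ 0 0 0).toLinearMap := by
    rw [filtT_le_iff]
    intro i _ y hy
    exact Submodule.mem_iSup_of_mem i ⟨y, hy, rfl⟩
  exact this hd

theorem exists_s : ∃ s : SkewA k G V R ρ →ₗ[k] HAlg k G V R ρ lam α β,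
    ∀ d, ∀ a ∈ grA k G V R ρ d, ∃ x ∈ grT k G V d, toH k G V R ρ 0 0 0 x = a ∧
      s a = toH k G V R ρ lam α β x := by
  have : ∀ d, ∃ l : grA k G V R ρ d →ₗ[k] FreeAlg k G V, ∀ a, l a ∈ grT k G V d ∧
      toH k G V R ρ 0 0 0 (l a) = a := by
    intro d
    exact exists_sect (toH k G V R ρ 0 0 0).toLinearMap (grT k G V d)
  choose l hl using this
  obtain ⟨s, hs⟩ := exists_lin (grA k G V R ρ) (compA k G V R ρ)
    (fun d a ha e => compA_gr k G V R ρ ha e) (grA_top k G V R ρ)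
    (fun d => (toH k G V R ρ lam α β).toLinearMap ∘ₗ l d)
  refine ⟨s, fun d a ha => ⟨l d ⟨a, ha⟩, (hl d _).1, (hl d _).2, ?_⟩⟩
  rw [hs d a ha]; rfl

end main

end DeformKoszul

/-- **Proposition 3.1** of Shepler–Witherspoon, "Deforming group actions on Koszul
algebras":  if `H_{λ,α,β}` is a PBW deformation of `A = S ⋊ G`, then `H_{λ,α,β}` is the
fiber at `t = 1` of a graded deformation `A_t` of `S ⋊ G` over `k[t]` (with `deg t = 1`).
A graded deformation of `A` over `k[t]` is encoded by its `k`-linear multiplication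
maps `μ_j : A ⊗ A → A`:  `μ_0` is the multiplication of `A`; `1_A` is the
multiplicative identity; `μ_j` is homogeneous of degree `−j`; and the star product
`a * b = Σ_j μ_j(a ⊗ b) t^j` is associative, i.e. in each `t`-degree `n` we have
`Σ_{i+j=n} μ_i(μ_j(a ⊗ b) ⊗ c) = Σ_{i+j=n} μ_i(a ⊗ μ_j(b ⊗ c))`.
The fiber `A_t|_{t=1}` is `A` with the (finitely supported) product
`a * b = Σ_j μ_j(a ⊗ b)`; an isomorphism of filtered algebras `H_{λ,α,β} ≅ A_t|_{t=1}`
is a `k`-linear bijection sending `1` to `1`, intertwining the multiplications and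
matching the filtrations. -/
theorem pbw_deformation_is_fiber_of_graded_deformation
    (k G V : Type) [Field k] [Group G] [Fintype G] [AddCommGroup V] [Module k V]
    [FiniteDimensional k V] (h2 : (2 : k) ≠ 0)
    (ρ : Representation k G V) (R : Submodule k (V ⊗[k] V))
    (hR : ∀ (g : G), ∀ x ∈ R, TensorProduct.map (ρ g) (ρ g) x ∈ R)
    (hKoszul : IsKoszul k V R)
    (lam : MonoidAlgebra k G ⊗[k] V →ₗ[k] MonoidAlgebra k G)
    (α : R →ₗ[k] (V ⊗[k] MonoidAlgebra k G))
    (β : R →ₗ[k] MonoidAlgebra k G)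
    (hPBW : IsPBW k G V R ρ lam α β) :
    ∃ μ : ℕ → (SkewA k G V R ρ ⊗[k] SkewA k G V R ρ →ₗ[k] SkewA k G V R ρ),
      -- μ₀ is the multiplication of A = S ⋊ G
      μ 0 = LinearMap.mul' k (SkewA k G V R ρ) ∧
      -- 1_A is the multiplicative identity for the star product
      (∀ j, 1 ≤ j → ∀ a : SkewA k G V R ρ,
        μ j ((1 : SkewA k G V R ρ) ⊗ₜ[k] a) = 0 ∧ μ j (a ⊗ₜ[k] (1 : SkewA k G V R ρ)) = 0) ∧
      -- the deformation is graded: μ_j is homogeneous of degree −j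
      (∀ (j p q : ℕ) (a b : SkewA k G V R ρ), a ∈ grA k G V R ρ p → b ∈ grA k G V R ρ q →
        μ j (a ⊗ₜ[k] b) ∈ grA k G V R ρ (p + q - j) ∧ (p + q < j → μ j (a ⊗ₜ[k] b) = 0)) ∧
      -- associativity of the star product, in each t-degree
      (∀ (n : ℕ) (a b c : SkewA k G V R ρ),
        ∑ ij ∈ Finset.HasAntidiagonal.antidiagonal n, μ ij.1 (μ ij.2 (a ⊗ₜ[k] b) ⊗ₜ[k] c)
          = ∑ ij ∈ Finset.HasAntidiagonal.antidiagonal n, μ ij.1 (a ⊗ₜ[k] μ ij.2 (b ⊗ₜ[k] c))) ∧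
      -- H_{λ,α,β} ≅ A_t |_{t=1} as filtered algebras
      ∃ f : HAlg k G V R ρ lam α β ≃ₗ[k] SkewA k G V R ρ,
        f 1 = 1 ∧
        (∀ x y : HAlg k G V R ρ lam α β,
          f (x * y) = ∑ᶠ j : ℕ, μ j (f x ⊗ₜ[k] f y)) ∧
        (∀ d, Submodule.map (f : HAlg k G V R ρ lam α β →ₗ[k] SkewA k G V R ρ)
            (filtH k G V R ρ lam α β d) = filtH k G V R ρ 0 0 0 d) := by
  obtain ⟨s, hs⟩ := exists_s k G V R ρ lam α β
  have hker : ∀ d, ∀ x ∈ grT k G V d, toH k G V R ρ lam α β x - s (toH k G V R ρ 0 0 0 x) ∈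
      filtH' k G V R ρ lam α β d := by
    intro d x hx
    obtain ⟨y, hy, hy1, hy2⟩ := hs d _ ⟨x, hx, rfl⟩
    have hy2' : s (toH k G V R ρ 0 0 0 x) = toH k G V R ρ lam α β y := hy2
    rw [hy2', ← map_sub]
    refine ker_toA k G V R ρ lam α β (Submodule.sub_mem _ hx hy) ?_
    rw [map_sub, hy1]
    exact sub_self _
  have hker0 : ∀ x ∈ grT k G V 0, s (toH k G V R ρ 0 0 0 x) = toH k G V R ρ lam α β x := by
    intro x hx
    have := hker 0 x hx
    simp only [filtH', Submodule.mem_bot] at this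
    exact (sub_eq_zero.1 this).symm
  have hle : ∀ d, (filtH k G V R ρ 0 0 0 d).map s ≤ filtH k G V R ρ lam α β d := by
    intro d
    rw [filtH, Submodule.map_le_iff_le_comap, Submodule.map_le_iff_le_comap, filtT_le_iff]
    intro i hi x hx
    obtain ⟨y, hy, hy1, hy2⟩ := hs i _ ⟨x, hx, rfl⟩
    rw [Submodule.mem_comap, Submodule.mem_comap, hy2]
    exact ⟨y, grT_le_filtT k G V hi hy, rfl⟩
  have hge : ∀ d, filtH k G V R ρ lam α β d ≤ (filtH k G V R ρ 0 0 0 d).map s := by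
    intro d
    induction d with
    | zero =>
      rintro _ ⟨x, hx, rfl⟩
      exact ⟨_, ⟨x, hx, rfl⟩, hker0 x hx⟩
    | succ d ih =>
      have ih' := ih.trans (Submodule.map_mono (f := s) (filtH_mono k G V R ρ 0 0 0 (Nat.le_succ d)))
      conv_lhs => rw [filtH, filtT]
      rw [Submodule.map_sup, sup_le_iff]
      refine ⟨ih', ?_⟩
      rintro _ ⟨x, hx, rfl⟩
      have h := ih' (hker (d+1) x hx)
      have h3 : s (toH k G V R ρ 0 0 0 x) ∈ (filtH k G V R ρ 0 0 0 (d+1)).map s :=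
        ⟨_, ⟨x, grT_le_filtT k G V le_rfl hx, rfl⟩, rfl⟩
      have := Submodule.add_mem _ h h3
      rwa [sub_add_cancel] at this
  have hmap : ∀ d, (filtH k G V R ρ 0 0 0 d).map s = filtH k G V R ρ lam α β d :=
    fun d => le_antisymm (hle d) (hge d)
  have hinj : Function.Injective s := by
    rw [injective_iff_map_eq_zero]
    intro a ha
    obtain ⟨d, hd⟩ := exists_filtH k G V R ρ 0 0 0 a
    have := filtH_finite k G V R ρ 0 0 0 d
    exact inj_of_rank s (filtH k G V R ρ 0 0 0 d)
      ((congrArg (fun W : Submodule k (HAlg k G V R ρ lam α β) => Module.finrank k W)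
        (hmap d)).trans (hPBW d)) a hd ha
  have hsurj : Function.Surjective s := by
    intro x
    obtain ⟨d, hd⟩ := exists_filtH k G V R ρ lam α β x
    obtain ⟨a, _, rfl⟩ := hge d hd
    exact ⟨a, rfl⟩
  let f : HAlg k G V R ρ lam α β ≃ₗ[k] SkewA k G V R ρ :=
    (LinearEquiv.ofBijective s ⟨hinj, hsurj⟩).symm
  have hfs : ∀ a, f (s a) = a := fun a => (LinearEquiv.ofBijective s ⟨hinj, hsurj⟩).symm_apply_apply a
  have hsf : ∀ x, s (f x) = x := fun x => (LinearEquiv.ofBijective s ⟨hinj, hsurj⟩).apply_symm_apply x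
  have hs1 : s 1 = 1 := by
    have := hker0 1 (one_mem_grT k G V)
    rwa [map_one (toH k G V R ρ 0 0 0), map_one (toH k G V R ρ lam α β)] at this
  have hf' : ∀ d, ∀ x ∈ filtH' k G V R ρ lam α β d, f x ∈ filtH' k G V R ρ 0 0 0 d := by
    intro d x hx
    cases d with
    | zero =>
      simp only [filtH', Submodule.mem_bot] at hx ⊢
      rw [hx, map_zero]
    | succ d =>
      obtain ⟨a, ha, rfl⟩ := hge d hx
      rw [hfs]
      exact ha
  let st : SkewA k G V R ρ →ₗ[k] SkewA k G V R ρ →ₗ[k] SkewA k G V R ρ :=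
    ((LinearMap.mul k (HAlg k G V R ρ lam α β)).compl₁₂ s s).compr₂ f.toLinearMap
  have hst : ∀ a b, st a b = f (s a * s b) := fun a b => rfl
  have hstar : ∀ p q, ∀ a ∈ grA k G V R ρ p, ∀ b ∈ grA k G V R ρ q,
      a * b ∈ grA k G V R ρ (p + q) ∧ st a b - a * b ∈ filtH' k G V R ρ 0 0 0 (p + q) := by
    intro p q a ha b hb
    obtain ⟨x, hx, rfl, hx2⟩ := hs p a ha
    obtain ⟨y, hy, rfl, hy2⟩ := hs q b hb
    have hxy := grT_mul_mem k G V hx hy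
    refine ⟨⟨x * y, hxy, map_mul (toH k G V R ρ 0 0 0) x y⟩, ?_⟩
    have h := hf' _ _ (hker (p + q) _ hxy)
    rw [map_sub, hfs, map_mul (toH k G V R ρ 0 0 0), map_mul (toH k G V R ρ lam α β)] at h
    rw [hst, hx2, hy2]
    exact h
  have hcomp : ∀ p q, ∀ a ∈ grA k G V R ρ p, ∀ b ∈ grA k G V R ρ q, ∀ e, p + q ≤ e →
      compA k G V R ρ e (st a b) = if p + q = e then a * b else 0 := by
    intro p q a ha b hb e he
    obtain ⟨h1, h3⟩ := hstar p q a ha b hb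
    have h4 := filtA'_comp k G V R ρ h3 he
    rw [map_sub, sub_eq_zero] at h4
    rw [h4, compA_gr k G V R ρ h1]
  obtain ⟨μ, m0, m1, m2, m3, m4⟩ := star_abstract (grA k G V R ρ) (compA k G V R ρ)
    (fun d a ha e => compA_gr k G V R ρ ha e) (grA_top k G V R ρ)
    ⟨1, one_mem_grT k G V, map_one (toH k G V R ρ 0 0 0)⟩ st
    (fun a b c => by simp only [hst, hsf, mul_assoc])
    (fun a => by rw [hst, hs1, one_mul, hfs])
    (fun a => by rw [hst, hs1, mul_one, hfs])
    (fun p q a ha b hb e he => by rw [hcomp p q a ha b hb e he.le, if_neg (by omega)])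
    (fun p q a ha b hb => by rw [hcomp p q a ha b hb _ le_rfl, if_pos rfl])
  refine ⟨μ, m0, m1, m2, m3, f, ?_, ?_, ?_⟩
  · rw [← hs1, hfs]
  · intro x y
    rw [← m4, hst, hsf, hsf]
  · intro d
    rw [← hmap d, ← Submodule.map_comp]
    have : (f : HAlg k G V R ρ lam α β →ₗ[k] SkewA k G V R ρ) ∘ₗ s = LinearMap.id :=
      LinearMap.ext hfs
    rw [this, Submodule.map_id]
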